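/- arXiv:1909.09935 — 7 statements merged into one kernel-verified Lean document; each statement's English description precedes it below -/
import Mathlib

section
/- Fix α ∈ ℝ and Ω ∈ ℝ. Define the quaternion-valued function q(t) = (cos(α/2), 0, sin(α/2)·cos(Ωt), sin(α/2)·sin(Ωt)) (real part first) and the pure quaternion ω(t) = Ω·(0, −2 sin²(α/2), −sin α · sin(Ωt), sin α · cos(Ωt)). Then q is differentiable and q̇(t) = ½ q(t) ∘ ω(t) for all t ∈ ℝ. -/
/-- The classical coning motion quaternion
`q(t) = (cos(α/2), 0, sin(α/2)cos(Ωt), sin(α/2)sin(Ωt))` satisfies the quaternion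
kinematic equation `q̇ = ½ q ∘ ω` with the coning angular velocity
`ω(t) = Ω(0, −2sin²(α/2), −sin α sin(Ωt), sin α cos(Ωt))` (a pure quaternion). -/
theorem coning_motion_quaternion_kinematics
    (α Ω : ℝ) (q ω : ℝ → Quaternion ℝ)
    (hq : ∀ t : ℝ, q t =
      ⟨Real.cos (α / 2), 0, Real.sin (α / 2) * Real.cos (Ω * t),
        Real.sin (α / 2) * Real.sin (Ω * t)⟩)
    (hω : ∀ t : ℝ, ω t =
      ⟨0, Ω * (-2 * Real.sin (α / 2) ^ 2), Ω * (-(Real.sin α * Real.sin (Ω * t))),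
        Ω * (Real.sin α * Real.cos (Ω * t))⟩) :
    Differentiable ℝ q ∧ ∀ t : ℝ, deriv q t = (1 / 2 : ℝ) • (q t * ω t) := by
  have key : ∀ t : ℝ, HasDerivAt q ((1 / 2 : ℝ) • (q t * ω t)) t := by
    intro t
    have e : q = fun t : ℝ => (⟨Real.cos (α / 2), 0, 0, 0⟩ : Quaternion ℝ)
        + ((Real.sin (α / 2) * Real.cos (Ω * t)) • (⟨0, 0, 1, 0⟩ : Quaternion ℝ)
        + (Real.sin (α / 2) * Real.sin (Ω * t)) • (⟨0, 0, 0, 1⟩ : Quaternion ℝ)) := by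
      funext t
      rw [hq t]
      ext <;> simp
    have hl : HasDerivAt (fun t : ℝ => Ω * t) Ω t := by
      simpa using (hasDerivAt_id t).const_mul Ω
    have h1 := (hl.cos.const_mul (Real.sin (α / 2))).smul_const (F := Quaternion ℝ) (⟨0, 0, 1, 0⟩ : Quaternion ℝ)
    have h2 := (hl.sin.const_mul (Real.sin (α / 2))).smul_const (F := Quaternion ℝ) (⟨0, 0, 0, 1⟩ : Quaternion ℝ)
    have h3 := (h1.add h2).const_add (F := Quaternion ℝ) (⟨Real.cos (α / 2), 0, 0, 0⟩ : Quaternion ℝ)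
    have hs : Real.sin α = 2 * Real.sin (α / 2) * Real.cos (α / 2) := by
      rw [← Real.sin_two_mul]; congr 1; ring
    have ha := Real.sin_sq_add_cos_sq (α / 2)
    have hb := Real.sin_sq_add_cos_sq (Ω * t)
    have e2 : (1 / 2 : ℝ) • (q t * ω t) =
        (Real.sin (α / 2) * (-Real.sin (Ω * t) * Ω)) • (⟨0, 0, 1, 0⟩ : Quaternion ℝ)
        + (Real.sin (α / 2) * (Real.cos (Ω * t) * Ω)) • (⟨0, 0, 0, 1⟩ : Quaternion ℝ) := by
      ext
      · rw [Quaternion.re_smul, Quaternion.re_mul, hq t, hω t, hs]; simp; ring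
      · rw [Quaternion.imI_smul, Quaternion.imI_mul, hq t, hω t, hs]; simp; linear_combination (2 * Ω * Real.sin (α / 2) ^ 2 * Real.cos (α / 2)) * hb
      · rw [Quaternion.imJ_smul, Quaternion.imJ_mul, hq t, hω t, hs]; simp; linear_combination (-Ω * Real.sin (α / 2) * Real.sin (Ω * t)) * ha
      · rw [Quaternion.imK_smul, Quaternion.imK_mul, hq t, hω t, hs]; simp; linear_combination (Ω * Real.sin (α / 2) * Real.cos (Ω * t)) * ha
    rw [e2, e]
    exact h3
  exact ⟨fun t => (key t).differentiableAt, fun t => (key t).deriv⟩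
end

section
/- Fix α ∈ ℝ with cos(α/2) ≠ 0 and Ω ∈ ℝ. Define g(t) = 2 tan(α/2)·(0, cos(Ωt), sin(Ωt)) ∈ ℝ³ and ω(t) = Ω·(−2 sin²(α/2), −sin α · sin(Ωt), sin α · cos(Ωt)) ∈ ℝ³. Then g is differentiable and ġ(t) = ω(t) + ½ g(t) × ω(t) + ¼ ⟨g(t), ω(t)⟩ g(t) for all t ∈ ℝ. -/
open Matrix

/-- The classical coning motion Rodrigues vector
`g(t) = 2 tan(α/2)(0, cos(Ωt), sin(Ωt))` satisfies the Rodrigues vector rate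
equation `ġ = ω + ½ g × ω + ¼ ⟨g, ω⟩ g` with the coning angular velocity
`ω(t) = Ω(−2sin²(α/2), −sin α sin(Ωt), sin α cos(Ωt))`. -/
theorem coning_motion_rodrigues_kinematics
    (α Ω : ℝ) (hα : Real.cos (α / 2) ≠ 0)
    (g ω : ℝ → Fin 3 → ℝ)
    (hg : ∀ t : ℝ, g t =
      (2 * Real.tan (α / 2)) • ![0, Real.cos (Ω * t), Real.sin (Ω * t)])
    (hω : ∀ t : ℝ, ω t =
      Ω • ![-2 * Real.sin (α / 2) ^ 2, -(Real.sin α * Real.sin (Ω * t)),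
        Real.sin α * Real.cos (Ω * t)]) :
    Differentiable ℝ g ∧
      ∀ t : ℝ, deriv g t =
        ω t + (1 / 2 : ℝ) • crossProduct (g t) (ω t)
            + (1 / 4 : ℝ) • ((∑ i, g t i * ω t i) • g t) := by
  have hd : ∀ t, HasDerivAt g ((2 * Real.tan (α / 2)) •
      ![0, -Real.sin (Ω * t) * Ω, Real.cos (Ω * t) * Ω]) t := by
    intro t
    have hl : HasDerivAt (fun t : ℝ => Ω * t) Ω t := by
      simpa using (hasDerivAt_id t).const_mul Ω
    have e : g = fun t => (2 * Real.tan (α / 2)) •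
        ![0, Real.cos (Ω * t), Real.sin (Ω * t)] := funext hg
    rw [e, hasDerivAt_pi]
    intro i
    fin_cases i
    · simpa using hasDerivAt_const t (0 : ℝ)
    · simpa using hl.cos.const_mul (2 * Real.tan (α / 2))
    · simpa using hl.sin.const_mul (2 * Real.tan (α / 2))
  refine ⟨fun t => (hd t).differentiableAt, fun t => ?_⟩
  have hs : Real.sin α = 2 * Real.sin (α / 2) * Real.cos (α / 2) := by
    rw [← Real.sin_two_mul]; congr 1; ring
  have hT : Real.sin (α / 2) = Real.tan (α / 2) * Real.cos (α / 2) :=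
    (Real.tan_mul_cos hα).symm
  have h1 := Real.sin_sq_add_cos_sq (α / 2)
  have h2 := Real.sin_sq_add_cos_sq (Ω * t)
  rw [(hd t).deriv, hg, hω, hs]
  generalize Real.tan (α / 2) = T at *
  generalize Real.sin (α / 2) = S at *
  generalize Real.cos (α / 2) = C at *
  generalize Real.sin (Ω * t) = s at *
  generalize Real.cos (Ω * t) = c at *
  subst hT
  ext i
  fin_cases i <;> simp [crossProduct, Fin.sum_univ_three]
  · linear_combination (-2 * Ω * T ^ 2 * C ^ 2) * h2
  · linear_combination (2 * T * s * Ω) * h1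
  · linear_combination (-2 * T * c * Ω) * h1
end

section
/- Fix α ∈ ℝ with α ≠ 0 and cos α ≠ 1, and Ω ∈ ℝ. Define σ(t) = α·(0, cos(Ωt), sin(Ωt)) ∈ ℝ³ and ω(t) = Ω·(−2 sin²(α/2), −sin α · sin(Ωt), sin α · cos(Ωt)) ∈ ℝ³. Then σ is differentiable, |σ(t)| = |α| for all t, and σ satisfies the Bortz rotation vector rate equation σ̇(t) = ω(t) + ½ σ(t) × ω(t) + (1/α²)·(1 − α·sin α / (2(1 − cos α)))·σ(t) × (σ(t) × ω(t)) for all t ∈ ℝ. -/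
open Matrix

/-- The classical coning motion rotation vector `σ(t) = α(0, cos(Ωt), sin(Ωt))`
has constant Euclidean magnitude `|α|` and satisfies the Bortz rotation vector
rate equation `σ̇ = ω + ½ σ × ω + A(α) σ × (σ × ω)` with
`A(α) = (1/α²)(1 − α sin α / (2(1 − cos α)))`, where
`ω(t) = Ω(−2sin²(α/2), −sin α sin(Ωt), sin α cos(Ωt))`. -/
theorem coning_motion_bortz_kinematics
    (α Ω : ℝ) (hα : α ≠ 0) (hcα : Real.cos α ≠ 1)
    (σ ω : ℝ → Fin 3 → ℝ)
    (hσ : ∀ t : ℝ, σ t = α • ![0, Real.cos (Ω * t), Real.sin (Ω * t)])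
    (hω : ∀ t : ℝ, ω t =
      Ω • ![-2 * Real.sin (α / 2) ^ 2, -(Real.sin α * Real.sin (Ω * t)),
        Real.sin α * Real.cos (Ω * t)]) :
    Differentiable ℝ σ ∧
    (∀ t : ℝ, Real.sqrt (∑ i, (σ t i) ^ 2) = |α|) ∧
    ∀ t : ℝ, deriv σ t =
      ω t + (1 / 2 : ℝ) • crossProduct (σ t) (ω t)
          + ((1 / α ^ 2) * (1 - α * Real.sin α / (2 * (1 - Real.cos α)))) •
              crossProduct (σ t) (crossProduct (σ t) (ω t)) := by
  have hd : ∀ t, HasDerivAt σ (![0, -(α * Ω * Real.sin (Ω * t)), α * Ω * Real.cos (Ω * t)]) t := by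
    intro t
    have hl : HasDerivAt (fun t : ℝ => Ω * t) Ω t := by
      simpa using (hasDerivAt_id t).const_mul Ω
    rw [hasDerivAt_pi]
    intro i
    have e : (fun x => σ x i) = fun x => (α • ![0, Real.cos (Ω * x), Real.sin (Ω * x)]) i := by
      funext x
      rw [hσ]
    rw [e]
    fin_cases i
    · simpa using hasDerivAt_const t (0 : ℝ)
    · have := (hl.cos).const_mul α
      simp only [Pi.smul_apply, smul_eq_mul]
      refine this.congr_deriv ?_
      simp
      ring
    · have := (hl.sin).const_mul α
      simp only [Pi.smul_apply, smul_eq_mul]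
      refine this.congr_deriv ?_
      simp
      ring
  refine ⟨fun t => (hd t).differentiableAt, ?_, ?_⟩
  · intro t
    rw [← Real.sqrt_sq_eq_abs]
    congr 1
    rw [hσ]
    simp [Fin.sum_univ_three]
    linear_combination α ^ 2 * Real.sin_sq_add_cos_sq (Ω * t)
  · intro t
    rw [(hd t).deriv, hσ, hω]
    have hh : 2 * Real.sin (α / 2) ^ 2 = 1 - Real.cos α := by
      rw [Real.sin_sq_eq_half_sub]
      ring_nf
    have hh' : -2 * Real.sin (α / 2) ^ 2 = -(1 - Real.cos α) := by linarith
    rw [hh']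
    have hS := Real.sin_sq_add_cos_sq α
    have ht := Real.sin_sq_add_cos_sq (Ω * t)
    generalize Real.sin α = S at *
    generalize Real.cos α = C at *
    generalize Real.sin (Ω * t) = s at *
    generalize Real.cos (Ω * t) = c at *
    have hD : 1 - C ≠ 0 := fun h => hcα (by linarith)
    have h1 : (α • ![0, c, s]) ⨯₃ (Ω • ![-(1 - C), -(S * s), S * c])
        = (α * Ω) • ![S, -((1 - C) * s), (1 - C) * c] := by
      ext i
      fin_cases i <;> simp [cross_apply]
      · linear_combination α * Ω * S * ht
      · ring
      · ring
    have h2 : (α • ![0, c, s]) ⨯₃ ((α * Ω) • ![S, -((1 - C) * s), (1 - C) * c])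
        = (α ^ 2 * Ω) • ![1 - C, S * s, -(S * c)] := by
      ext i
      fin_cases i <;> simp [cross_apply]
      · linear_combination α ^ 2 * Ω * (1 - C) * ht
      · ring
      · ring
    rw [h1, h2]
    have hS2 : S ^ 2 = 1 - C ^ 2 := by linarith
    ext i
    fin_cases i <;> simp <;> field_simp
    · ring
    · ring_nf
      rw [hS2]
      ring
    · ring_nf
      rw [hS2]
      ring
end

section
/- Let ω : ℝ → ℝ³ be continuous and g : ℝ → ℝ³ be differentiable with ġ(t) = ω(t) + ½ g(t) × ω(t) + ¼ ⟨g(t), ω(t)⟩ g(t) for all t. Define the quaternion-valued function q(t) whose real part is 2/√(4 + |g(t)|²) and whose vector part is g(t)/√(4 + |g(t)|²). Then q(t) has unit norm for every t, q is differentiable, and q̇(t) = ½ q(t) ∘ ω(t) for all t, where ω(t) is regarded as a pure quaternion. -/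
open Matrix

/-- Quaternion from its four real components. -/
def mkq (a b c d : ℝ) : Quaternion ℝ := ⟨a, b, c, d⟩

theorem mkq_key (a b c d x y z : ℝ) : (1 / 2 : ℝ) • (mkq a b c d * mkq 0 x y z) =
    mkq ((-b * x - c * y - d * z) / 2) ((a * x + c * z - d * y) / 2)
      ((a * y - b * z + d * x) / 2) ((a * z + b * y - c * x) / 2) := by
  ext <;> simp <;> simp [mkq] <;> ring

theorem quat_hasDerivAt {a b c d : ℝ → ℝ} {a' b' c' d' t : ℝ}
    (ha : HasDerivAt a a' t) (hb : HasDerivAt b b' t)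
    (hc : HasDerivAt c c' t) (hd : HasDerivAt d d' t) :
    HasDerivAt (fun x => mkq (a x) (b x) (c x) (d x)) (mkq a' b' c' d') t := by
  have h := (((ha.smul_const (mkq 1 0 0 0)).fun_add
    (hb.smul_const (mkq 0 1 0 0))).fun_add
    (hc.smul_const (mkq 0 0 1 0))).fun_add
    (hd.smul_const (mkq 0 0 0 1))
  have e : ∀ a b c d : ℝ, mkq a b c d =
      a • mkq 1 0 0 0 + b • mkq 0 1 0 0 + c • mkq 0 0 1 0 + d • mkq 0 0 0 1 := by
    intro a b c d
    ext <;> simp <;> simp [mkq]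
  simp only [← e] at h
  exact h

/-- If the Rodrigues vector `g` satisfies `ġ = ω + ½ g × ω + ¼ ⟨g, ω⟩ g`, then the
associated quaternion `q = (2 + g)/√(4 + |g|²)` has unit norm, is differentiable,
and satisfies the quaternion kinematic equation `q̇ = ½ q ∘ ω`. -/
theorem rodrigues_to_quaternion_kinematics
    (ω : ℝ → Fin 3 → ℝ) (hωc : Continuous ω)
    (g : ℝ → Fin 3 → ℝ) (hg : Differentiable ℝ g)
    (heq : ∀ t : ℝ, deriv g t =
      ω t + (1 / 2 : ℝ) • crossProduct (g t) (ω t)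
          + (1 / 4 : ℝ) • ((∑ i, g t i * ω t i) • g t))
    (q : ℝ → Quaternion ℝ)
    (hq : ∀ t : ℝ, q t =
      ⟨2 / Real.sqrt (4 + ∑ i, (g t i) ^ 2),
        g t 0 / Real.sqrt (4 + ∑ i, (g t i) ^ 2),
        g t 1 / Real.sqrt (4 + ∑ i, (g t i) ^ 2),
        g t 2 / Real.sqrt (4 + ∑ i, (g t i) ^ 2)⟩) :
    (∀ t : ℝ, ‖q t‖ = 1) ∧ Differentiable ℝ q ∧
      ∀ t : ℝ, deriv q t =
        (1 / 2 : ℝ) • (q t * ⟨0, ω t 0, ω t 1, ω t 2⟩) := by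
  have hpos : ∀ t, 0 < 4 + ∑ i, (g t i) ^ 2 := fun t => by positivity
  have hspos : ∀ t, 0 < Real.sqrt (4 + ∑ i, (g t i) ^ 2) := fun t => Real.sqrt_pos.2 (hpos t)
  have hsq : ∀ t, Real.sqrt (4 + ∑ i, (g t i) ^ 2) ^ 2 = 4 + ∑ i, (g t i) ^ 2 :=
    fun t => Real.sq_sqrt (hpos t).le
  have hgi : ∀ t i, HasDerivAt (fun x => g x i) (deriv g t i) t := fun t i =>
    (hasDerivAt_pi.1 (hg t).hasDerivAt) i
  have hs : ∀ t, HasDerivAt (fun x => Real.sqrt (4 + ∑ i, (g x i) ^ 2))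
      ((∑ i, g t i * ω t i) * Real.sqrt (4 + ∑ i, (g t i) ^ 2) / 4) t := by
    intro t
    have h1 : HasDerivAt (fun x => 4 + ∑ i, (g x i) ^ 2)
        (∑ i, 2 * g t i * deriv g t i) t := by
      refine HasDerivAt.const_add 4 (HasDerivAt.fun_sum fun i _ => ?_)
      simpa using (hgi t i).fun_pow 2
    have h2 := h1.sqrt (hpos t).ne'
    convert h2 using 1
    have hp := hspos t
    have hq2 := hsq t
    rw [eq_div_iff (by positivity)]
    generalize Real.sqrt (4 + ∑ i, (g t i) ^ 2) = s at hp hq2 ⊢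
    rw [heq t]
    simp [Fin.sum_univ_three, cross_apply, vecHead, vecTail] at hq2 ⊢
    linear_combination (g t 0 * ω t 0 + g t 1 * ω t 1 + g t 2 * ω t 2) / 2 * hq2
  have key : ∀ t, HasDerivAt q ((1 / 2 : ℝ) • (q t * ⟨0, ω t 0, ω t 1, ω t 2⟩)) t := by
    intro t
    have hp := hspos t
    have h := quat_hasDerivAt ((hasDerivAt_const t (2 : ℝ)).fun_div (hs t) hp.ne')
      ((hgi t 0).fun_div (hs t) hp.ne') ((hgi t 1).fun_div (hs t) hp.ne')
      ((hgi t 2).fun_div (hs t) hp.ne')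
    refine HasDerivAt.congr_deriv (f := q) (h.congr_of_eventuallyEq (Filter.Eventually.of_forall hq)) ?_
    rw [hq t, heq t]
    refine Eq.trans ?_ (mkq_key _ _ _ _ _ _ _).symm
    generalize Real.sqrt (4 + ∑ i, (g t i) ^ 2) = s at hp ⊢
    congr 1 <;> simp [Fin.sum_univ_three, cross_apply, vecHead, vecTail] <;> field_simp <;> ring
  refine ⟨fun t => ?_, fun t => (key t).differentiableAt, fun t => (key t).deriv⟩
  have h : Quaternion.normSq (q t) = 1 := by
    rw [Quaternion.normSq_def', hq t]
    have hp := hspos t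
    have hq2 := hsq t
    generalize Real.sqrt (4 + ∑ i, (g t i) ^ 2) = s at hp hq2 ⊢
    simp only [Fin.sum_univ_three] at hq2 ⊢
    field_simp
    linarith
  rw [Quaternion.normSq_eq_norm_mul_self] at h
  nlinarith [norm_nonneg (q t)]
end

section
/- Let d₀, d₁, d₂ ∈ ℝ³ and define ω(t) = d₀ + t·d₁ + t²·d₂ and θ(t) = ∫₀ᵗ ω(s) ds. If σ : ℝ → ℝ³ is differentiable with σ(0) = 0 and σ̇(t) = ω(t) + ½ θ(t) × ω(t) for all t, then σ(t) = t·d₀ + (t²/2)·d₁ + (t³/12)·(4·d₂ + d₀ × d₁) + (t⁴/12)·(d₀ × d₂) + (t⁵/60)·(d₁ × d₂) for all t ∈ ℝ. -/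
open Matrix

/-- Solution of the simplified rotation vector rate equation
`σ̇ = ω + ½ (∫₀ᵗ ω) × ω`, `σ(0) = 0`, for quadratic angular velocity
`ω(t) = d₀ + t d₁ + t² d₂`:
`σ(t) = t d₀ + (t²/2) d₁ + (t³/12)(4 d₂ + d₀ × d₁) + (t⁴/12) d₀ × d₂ + (t⁵/60) d₁ × d₂`. -/
theorem simplified_rotation_vector_quadratic_solution
    (d0 d1 d2 : Fin 3 → ℝ)
    (ω : ℝ → Fin 3 → ℝ) (hω : ∀ t : ℝ, ω t = d0 + t • d1 + t ^ 2 • d2)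
    (θ : ℝ → Fin 3 → ℝ) (hθ : ∀ t : ℝ, θ t = ∫ s in (0 : ℝ)..t, ω s)
    (σ : ℝ → Fin 3 → ℝ) (hσd : Differentiable ℝ σ) (hσ0 : σ 0 = 0)
    (heq : ∀ t : ℝ, deriv σ t = ω t + (1 / 2 : ℝ) • crossProduct (θ t) (ω t)) :
    ∀ t : ℝ, σ t =
      t • d0 + (t ^ 2 / 2) • d1
      + (t ^ 3 / 12) • ((4 : ℝ) • d2 + crossProduct d0 d1)
      + (t ^ 4 / 12) • crossProduct d0 d2
      + (t ^ 5 / 60) • crossProduct d1 d2 := by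
  have P : ∀ (n : ℕ) (c x : ℝ) (v : Fin 3 → ℝ),
      HasDerivAt (fun t : ℝ => (t ^ (n + 1) / c) • v) ((((n + 1 : ℕ) : ℝ) * x ^ n / c) • v) x := by
    intro n c x v
    have h := ((hasDerivAt_pow (n + 1) x).div_const c).smul_const v
    simpa using h
  have hth : ∀ t : ℝ, θ t = (t ^ 1 / 1) • d0 + (t ^ 2 / 2) • d1 + (t ^ 3 / 3) • d2 := by
    intro t
    have hd : ∀ x : ℝ, HasDerivAt
        (fun t : ℝ => (t ^ 1 / 1) • d0 + (t ^ 2 / 2) • d1 + (t ^ 3 / 3) • d2) (ω x) x := by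
      intro x
      refine (((P 0 1 x d0).add (P 1 2 x d1)).add (P 2 3 x d2)).congr_deriv ?_
      rw [hω]
      ext i
      simp
      try ring
    have hc : Continuous ω := by
      have : ω = fun t => d0 + t • d1 + t ^ 2 • d2 := funext hω
      rw [this]
      fun_prop
    rw [hθ, intervalIntegral.integral_eq_sub_of_hasDerivAt (fun x _ => hd x)
      (hc.intervalIntegrable _ _)]
    simp
  let F : ℝ → Fin 3 → ℝ := fun t => (t ^ 1 / 1) • d0 + (t ^ 2 / 2) • d1
      + (t ^ 3 / 12) • ((4 : ℝ) • d2 + crossProduct d0 d1)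
      + (t ^ 4 / 12) • crossProduct d0 d2
      + (t ^ 5 / 60) • crossProduct d1 d2
  have hF : ∀ x : ℝ, HasDerivAt F (deriv σ x) x := by
    intro x
    refine (((((P 0 1 x d0).add (P 1 2 x d1)).add (P 2 12 x _)).add (P 3 12 x _)).add
      (P 4 60 x _)).congr_deriv ?_
    rw [heq, hth, hω]
    ext i
    fin_cases i <;> simp [cross_apply, vecHead, vecTail] <;> ring
  have hG : ∀ x : ℝ, HasDerivAt (σ - F) 0 x := by
    intro x
    exact ((hσd x).hasDerivAt.sub (hF x)).congr_deriv (sub_self _)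
  intro t
  have h := is_const_of_deriv_eq_zero (fun x => (hG x).differentiableAt)
    (fun x => (hG x).deriv) t 0
  have h0 : F 0 = 0 := by simp [F]
  have h1 : σ t = F t := by
    rw [Pi.sub_apply, Pi.sub_apply, hσ0, h0, sub_self] at h
    exact sub_eq_zero.mp h
  rw [h1]
  simp [F]
end

section
/- Let T > 0 and d₀, d₁ ∈ ℝ³, define ω(t) = d₀ + t·d₁, θ(t) = ∫₀ᵗ ω(s) ds, Δθ₁ = ∫₀ᵀ ω(s) ds and Δθ₂ = ∫_T^{2T} ω(s) ds. If σ : ℝ → ℝ³ is differentiable with σ(0) = 0 and σ̇(t) = ω(t) + ½ θ(t) × ω(t) for all t, then σ(2T) = Δθ₁ + Δθ₂ + (2/3)·(Δθ₁ × Δθ₂) (the mainstream 2-sample attitude algorithm is exact for linear angular velocity). -/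
open Matrix

/-- The mainstream 2-sample attitude algorithm is exact for linear angular
velocity: if `ω(t) = d₀ + t d₁`, `σ̇ = ω + ½ (∫₀ᵗ ω) × ω`, `σ(0) = 0`, and
`Δθ₁ = ∫₀ᵀ ω`, `Δθ₂ = ∫_T^{2T} ω`, then
`σ(2T) = Δθ₁ + Δθ₂ + (2/3) Δθ₁ × Δθ₂`. -/
theorem mainstream_two_sample_algorithm_exact
    (T : ℝ) (hT : 0 < T) (d0 d1 : Fin 3 → ℝ)
    (ω : ℝ → Fin 3 → ℝ) (hω : ∀ t : ℝ, ω t = d0 + t • d1)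
    (θ : ℝ → Fin 3 → ℝ) (hθ : ∀ t : ℝ, θ t = ∫ s in (0 : ℝ)..t, ω s)
    (Δθ1 Δθ2 : Fin 3 → ℝ)
    (h1 : Δθ1 = ∫ s in (0 : ℝ)..T, ω s)
    (h2 : Δθ2 = ∫ s in T..(2 * T), ω s)
    (σ : ℝ → Fin 3 → ℝ) (hσd : Differentiable ℝ σ) (hσ0 : σ 0 = 0)
    (heq : ∀ t : ℝ, deriv σ t = ω t + (1 / 2 : ℝ) • crossProduct (θ t) (ω t)) :
    σ (2 * T) = Δθ1 + Δθ2 + (2 / 3 : ℝ) • crossProduct Δθ1 Δθ2 := by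
  have hlin : ∀ t : ℝ, HasDerivAt (fun t : ℝ => t • d0 + (t ^ 2 / 2) • d1) (ω t) t := by
    intro t
    rw [hω]
    have e1 := (hasDerivAt_id t).smul_const d0
    have e2 := (((hasDerivAt_id t).pow 2).div_const 2).smul_const d1
    refine (e1.add e2).congr_deriv ?_
    ext i
    simp
  have hc : Continuous ω := by
    have : ω = fun t => d0 + t • d1 := funext hω
    rw [this]; fun_prop
  have hint : ∀ a b : ℝ, ∫ s in a..b, ω s
      = (b • d0 + (b ^ 2 / 2) • d1) - (a • d0 + (a ^ 2 / 2) • d1) := fun a b =>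
    intervalIntegral.integral_eq_sub_of_hasDerivAt (fun t _ => hlin t)
      (hc.intervalIntegrable a b)
  have hD : ∀ t : ℝ, HasDerivAt (fun t : ℝ => σ t - ((t • d0 + (t ^ 2 / 2) • d1)
      + (t ^ 3 / 12) • crossProduct d0 d1)) 0 t := by
    intro t
    have e3 := (((hasDerivAt_id t).pow 3).div_const 12).smul_const (crossProduct d0 d1)
    have e := (hσd t).hasDerivAt.sub ((hlin t).add e3)
    refine e.congr_deriv ?_
    rw [heq, hθ, hint, hω]
    ext i
    fin_cases i <;> simp [cross_apply, vecHead, vecTail] <;> ring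
  have hconst := is_const_of_deriv_eq_zero (fun t => (hD t).differentiableAt)
    (fun t => (hD t).deriv) (2 * T) 0
  simp only [hσ0] at hconst
  rw [sub_eq_iff_eq_add] at hconst
  rw [hconst, h1, h2, hint, hint]
  ext i
  fin_cases i <;> simp [cross_apply, vecHead, vecTail] <;> ring
end

section
/- Let T > 0 and d₀, d₁, d₂ ∈ ℝ³, define ω(t) = d₀ + t·d₁ + t²·d₂, θ(t) = ∫₀ᵗ ω(s) ds, and Δθ_k = ∫_{(k−1)T}^{kT} ω(s) ds for k = 1, 2, 3. If σ : ℝ → ℝ³ is differentiable with σ(0) = 0 and σ̇(t) = ω(t) + ½ θ(t) × ω(t) for all t, then σ(3T) = Δθ₁ + Δθ₂ + Δθ₃ + (33/80)·(Δθ₁ × Δθ₃) + (57/80)·(Δθ₂ × (Δθ₃ − Δθ₁)) (the mainstream non-coning-optimized 3-sample attitude algorithm is exact for quadratic angular velocity). -/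
open Matrix

/-- The mainstream non-coning-optimized 3-sample attitude algorithm is exact for
quadratic angular velocity: if `ω(t) = d₀ + t d₁ + t² d₂`,
`σ̇ = ω + ½ (∫₀ᵗ ω) × ω`, `σ(0) = 0`, and `Δθₖ = ∫_{(k−1)T}^{kT} ω` for
`k = 1, 2, 3`, then `σ(3T) = Δθ₁ + Δθ₂ + Δθ₃ + (33/80) Δθ₁ × Δθ₃
+ (57/80) Δθ₂ × (Δθ₃ − Δθ₁)`. -/
theorem mainstream_three_sample_algorithm_exact
    (T : ℝ) (hT : 0 < T) (d0 d1 d2 : Fin 3 → ℝ)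
    (ω : ℝ → Fin 3 → ℝ) (hω : ∀ t : ℝ, ω t = d0 + t • d1 + t ^ 2 • d2)
    (θ : ℝ → Fin 3 → ℝ) (hθ : ∀ t : ℝ, θ t = ∫ s in (0 : ℝ)..t, ω s)
    (Δθ1 Δθ2 Δθ3 : Fin 3 → ℝ)
    (h1 : Δθ1 = ∫ s in (0 : ℝ)..T, ω s)
    (h2 : Δθ2 = ∫ s in T..(2 * T), ω s)
    (h3 : Δθ3 = ∫ s in (2 * T)..(3 * T), ω s)
    (σ : ℝ → Fin 3 → ℝ) (hσd : Differentiable ℝ σ) (hσ0 : σ 0 = 0)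
    (heq : ∀ t : ℝ, deriv σ t = ω t + (1 / 2 : ℝ) • crossProduct (θ t) (ω t)) :
    σ (3 * T) = Δθ1 + Δθ2 + Δθ3
      + (33 / 80 : ℝ) • crossProduct Δθ1 Δθ3
      + (57 / 80 : ℝ) • crossProduct Δθ2 (Δθ3 - Δθ1) := by
  have key : ∀ a b : ℝ, ∫ s in a..b, ω s
      = (b • d0 + (b ^ 2 / 2) • d1 + (b ^ 3 / 3) • d2)
        - (a • d0 + (a ^ 2 / 2) • d1 + (a ^ 3 / 3) • d2) := by
    intro a b
    have hc : Continuous ω := by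
      have : ω = fun t => d0 + t • d1 + t ^ 2 • d2 := funext hω
      rw [this]; fun_prop
    refine intervalIntegral.integral_eq_sub_of_hasDerivAt
      (f := fun t : ℝ => t • d0 + (t ^ 2 / 2) • d1 + (t ^ 3 / 3) • d2) ?_
      (hc.intervalIntegrable a b)
    intro x _
    rw [hω]
    have e1 := (hasDerivAt_id x).smul_const d0
    have e2 := ((hasDerivAt_pow 2 x).div_const 2).smul_const d1
    have e3 := ((hasDerivAt_pow 3 x).div_const 3).smul_const d2
    refine ((e1.add e2).add e3).congr_deriv ?_
    ext i
    simp
  have hG : ∀ t : ℝ, HasDerivAt (fun t : ℝ => t • d0 + (t ^ 2 / 2) • d1 + (t ^ 3 / 3) • d2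
      + (t ^ 3 / 12) • crossProduct d0 d1 + (t ^ 4 / 12) • crossProduct d0 d2
      + (t ^ 5 / 60) • crossProduct d1 d2) (deriv σ t) t := by
    intro x
    have e1 := (hasDerivAt_id x).smul_const d0
    have e2 := ((hasDerivAt_pow 2 x).div_const 2).smul_const d1
    have e3 := ((hasDerivAt_pow 3 x).div_const 3).smul_const d2
    have e4 := ((hasDerivAt_pow 3 x).div_const 12).smul_const (crossProduct d0 d1)
    have e5 := ((hasDerivAt_pow 4 x).div_const 12).smul_const (crossProduct d0 d2)
    have e6 := ((hasDerivAt_pow 5 x).div_const 60).smul_const (crossProduct d1 d2)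
    refine (((((e1.add e2).add e3).add e4).add e5).add e6).congr_deriv ?_
    rw [heq, hθ, key, hω]
    ext i
    fin_cases i <;> simp [cross_apply, vecHead, vecTail] <;> ring
  have hfin := is_const_of_deriv_eq_zero (𝕜 := ℝ) (f := fun t => σ t - (t • d0 + (t ^ 2 / 2) • d1
      + (t ^ 3 / 3) • d2
      + (t ^ 3 / 12) • crossProduct d0 d1 + (t ^ 4 / 12) • crossProduct d0 d2
      + (t ^ 5 / 60) • crossProduct d1 d2))
      (fun t => ((hσd t).hasDerivAt.sub (hG t)).differentiableAt)
      (fun t => ((hσd t).hasDerivAt.sub (hG t)).deriv.trans (sub_self _)) (3 * T) 0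
  have hs := sub_eq_iff_eq_add.mp hfin
  rw [hs, hσ0, h1, h2, h3, key, key, key]
  ext i
  fin_cases i <;> simp [cross_apply, vecHead, vecTail] <;> ring
end
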